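/- Let X ⊆ ℝⁿ be compact, let z ∈ ℝⁿ with z ∉ X, and set δ := dist(z, X) > 0. Let f : X → ℝ be measurable with f(y) ≥ m > 0 for all y ∈ X, and let μ be the Borel measure dμ = f dλ on X. Let (φ_{z,ε})_{ε > 0} be a family of nonnegative measurable functions on ℝⁿ with 0 < ∫_{ℝⁿ} φ_{z,ε}² dλ < ∞, satisfying the energy-concentration property: for every δ′ > 0, ∫_{{y : ‖y − z‖ > δ′}} φ_{z,ε}² dλ / ∫_{ℝⁿ} φ_{z,ε}² dλ → 0 as ε → 0. Then: (i) for every natural number d and every ε > 0, sup { (∫_X φ_{z,ε}(y) p(y) dλ(y))² : p a real polynomial of degree at most d with ∫ p² dμ = 1 } ≤ ∫_X (1/f(y)) φ_{z,ε}(y)² dλ(y) ≤ (1/m) ∫_{{y : ‖y − z‖ ≥ δ}} φ_{z,ε}(y)² dλ(y); and (ii) consequently, lim_{ε → 0} [ ∫_X (1/f(y)) φ_{z,ε}(y)² dλ(y) / ∫_{ℝⁿ} φ_{z,ε}(y)² dλ(y) ] = 0. -/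

import Mathlib

open MeasureTheory MvPolynomial Filter

/-!
Writing `φ p = (φ / √f) (√f p)`, the Cauchy–Schwarz inequality bounds `(∫_X φ p)²` by
`∫_X φ² / f` whenever `∫_X f p² = 1`. Since `f ≥ m`, this weighted energy is at most `1 / m` times
the energy of `φ` on any set containing `X`. A set whose closure misses `z` lies outside some ball
around `z`, and there the share of the energy vanishes in the limit.
-/

section WeightedEnergy

variable {α : Type*} [MeasurableSpace α] {ν : Measure α} {u v w : α → ℝ} {m : ℝ}

theorem sq_integral_mul_le (hu : MemLp u 2 ν) (hv : MemLp v 2 ν) :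
    (∫ y, u y * v y ∂ν) ^ 2 ≤ (∫ y, u y ^ 2 ∂ν) * ∫ y, v y ^ 2 ∂ν := by
  have inner_toLp_eq {a b : α → ℝ} (ha : MemLp a 2 ν) (hb : MemLp b 2 ν) :
      inner ℝ (ha.toLp a) (hb.toLp b) = ∫ y, a y * b y ∂ν := by
    rw [L2.inner_def]
    refine integral_congr_ae ?_
    filter_upwards [ha.coeFn_toLp, hb.coeFn_toLp] with y hay hby
    rw [hay, hby, RCLike.inner_apply, conj_trivial, mul_comm]
  simpa only [inner_toLp_eq, ← sq] using real_inner_mul_inner_self_le (hu.toLp u) (hv.toLp v)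

theorem sq_integral_mul_le_weighted (hw : AEMeasurable w ν) (hw_pos : ∀ᵐ y ∂ν, 0 < w y)
    (hu : AEStronglyMeasurable u ν) (hv : AEStronglyMeasurable v ν)
    (hu_int : Integrable (fun y => 1 / w y * u y ^ 2) ν)
    (hv_int : Integrable (fun y => w y * v y ^ 2) ν) :
    (∫ y, u y * v y ∂ν) ^ 2 ≤ (∫ y, 1 / w y * u y ^ 2 ∂ν) * ∫ y, w y * v y ^ 2 ∂ν := by
  have hsqrt : AEStronglyMeasurable (fun y => √(w y)) ν := hw.sqrt.aestronglyMeasurable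
  have hu_sq : (fun y => 1 / w y * u y ^ 2) =ᵐ[ν] fun y => (u y / √(w y)) ^ 2 := by
    filter_upwards [hw_pos] with y hy
    rw [div_pow, Real.sq_sqrt hy.le, one_div_mul_eq_div]
  have hv_sq : (fun y => w y * v y ^ 2) =ᵐ[ν] fun y => (√(w y) * v y) ^ 2 := by
    filter_upwards [hw_pos] with y hy
    rw [mul_pow, Real.sq_sqrt hy.le]
  have huv : (fun y => u y * v y) =ᵐ[ν] fun y => u y / √(w y) * (√(w y) * v y) := by
    filter_upwards [hw_pos] with y hy
    rw [← mul_assoc, div_mul_cancel₀ _ (Real.sqrt_pos.2 hy).ne']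
  rw [integral_congr_ae huv, integral_congr_ae hu_sq, integral_congr_ae hv_sq]
  exact sq_integral_mul_le
    ((memLp_two_iff_integrable_sq (hu.div₀ hsqrt)).2 (hu_int.congr hu_sq))
    ((memLp_two_iff_integrable_sq (hsqrt.mul hv)).2 (hv_int.congr hv_sq))

theorem integral_withDensity_ofReal_eq_integral_mul (hw : AEMeasurable w ν)
    (hw_nonneg : 0 ≤ᵐ[ν] w) (g : α → ℝ) :
    ∫ y, g y ∂ν.withDensity (fun y => ENNReal.ofReal (w y)) = ∫ y, w y * g y ∂ν := by
  rw [integral_withDensity_eq_integral_toReal_smul₀ hw.ennreal_ofReal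
    (ae_of_all _ fun _ => ENNReal.ofReal_lt_top)]
  refine integral_congr_ae ?_
  filter_upwards [hw_nonneg] with y hy
  rw [ENNReal.toReal_ofReal hy, smul_eq_mul]

theorem one_div_mul_sq_ae_le (hm : 0 < m) (hmw : ∀ᵐ y ∂ν, m ≤ w y) :
    ∀ᵐ y ∂ν, 1 / w y * u y ^ 2 ≤ 1 / m * u y ^ 2 := by
  filter_upwards [hmw] with y hy
  gcongr

theorem one_div_mul_sq_ae_nonneg (hm : 0 < m) (hmw : ∀ᵐ y ∂ν, m ≤ w y) :
    ∀ᵐ y ∂ν, 0 ≤ 1 / w y * u y ^ 2 := by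
  filter_upwards [hmw] with y hy
  have hwy : 0 < w y := hm.trans_le hy
  positivity

theorem integrable_one_div_mul_sq (hw : AEMeasurable w ν) (hm : 0 < m)
    (hmw : ∀ᵐ y ∂ν, m ≤ w y) (hu : MemLp u 2 ν) :
    Integrable (fun y => 1 / w y * u y ^ 2) ν := by
  refine (hu.integrable_sq.const_mul (1 / m)).mono'
    ((hw.const_div 1).aestronglyMeasurable.mul (hu.1.pow 2)) ?_
  filter_upwards [one_div_mul_sq_ae_nonneg hm hmw, one_div_mul_sq_ae_le hm hmw]
    with y hy_nonneg hy_le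
  rwa [Real.norm_of_nonneg hy_nonneg]

theorem sq_integral_mul_le_of_integral_sq_withDensity_eq_one (hw : AEMeasurable w ν)
    (hm : 0 < m) (hmw : ∀ᵐ y ∂ν, m ≤ w y) (hu : MemLp u 2 ν) (hv : AEStronglyMeasurable v ν)
    (hv_one : ∫ y, v y ^ 2 ∂ν.withDensity (fun y => ENNReal.ofReal (w y)) = 1) :
    (∫ y, u y * v y ∂ν) ^ 2 ≤ ∫ y, 1 / w y * u y ^ 2 ∂ν := by
  have hw_pos : ∀ᵐ y ∂ν, 0 < w y := hmw.mono fun _ => hm.trans_le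
  rw [integral_withDensity_ofReal_eq_integral_mul hw (hw_pos.mono fun _ => le_of_lt)] at hv_one
  have hv_int : Integrable (fun y => w y * v y ^ 2) ν :=
    not_imp_comm.1 integral_undef (hv_one ▸ one_ne_zero)
  simpa only [hv_one, mul_one] using sq_integral_mul_le_weighted hw hw_pos hu.1 hv
    (integrable_one_div_mul_sq hw hm hmw hu) hv_int

theorem setIntegral_one_div_mul_sq_le {X S : Set α} (hXS : X ⊆ S)
    (hw : AEMeasurable w (ν.restrict X)) (hm : 0 < m) (hmw : ∀ᵐ y ∂ν.restrict X, m ≤ w y)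
    (hu : MemLp u 2 (ν.restrict S)) :
    ∫ y in X, 1 / w y * u y ^ 2 ∂ν ≤ 1 / m * ∫ y in S, u y ^ 2 ∂ν := by
  have huX : MemLp u 2 (ν.restrict X) := hu.mono_measure (Measure.restrict_mono_set ν hXS)
  calc ∫ y in X, 1 / w y * u y ^ 2 ∂ν
      ≤ ∫ y in X, 1 / m * u y ^ 2 ∂ν :=
        integral_mono_ae (integrable_one_div_mul_sq hw hm hmw huX)
          (huX.integrable_sq.const_mul _) (one_div_mul_sq_ae_le hm hmw)
    _ = 1 / m * ∫ y in X, u y ^ 2 ∂ν := integral_const_mul _ _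
    _ ≤ 1 / m * ∫ y in S, u y ^ 2 ∂ν := by
        refine mul_le_mul_of_nonneg_left ?_ (one_div_pos.2 hm).le
        exact setIntegral_mono_set hu.integrable_sq (ae_of_all _ fun y => sq_nonneg (u y))
          hXS.eventuallyLE

theorem tendsto_setIntegral_one_div_mul_sq_div {ι : Type*} {l : Filter ι} {φ : ι → α → ℝ}
    {X S : Set α} (hXS : X ⊆ S) (hw : AEMeasurable w (ν.restrict X)) (hm : 0 < m)
    (hmw : ∀ᵐ y ∂ν.restrict X, m ≤ w y) (hφ : ∀ᶠ i in l, MemLp (φ i) 2 ν)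
    (hφ_pos : ∀ᶠ i in l, 0 < ∫ y, φ i y ^ 2 ∂ν)
    (hS : Tendsto (fun i => (∫ y in S, φ i y ^ 2 ∂ν) / ∫ y, φ i y ^ 2 ∂ν) l (nhds 0)) :
    Tendsto (fun i => (∫ y in X, 1 / w y * φ i y ^ 2 ∂ν) / ∫ y, φ i y ^ 2 ∂ν) l (nhds 0) := by
  have hbound : Tendsto (fun i => 1 / m * ((∫ y in S, φ i y ^ 2 ∂ν) / ∫ y, φ i y ^ 2 ∂ν)) l
      (nhds 0) := by
    simpa only [mul_zero] using hS.const_mul (1 / m)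
  refine squeeze_zero' ?_ ?_ hbound
  · filter_upwards [hφ_pos] with i hi_pos
    exact div_nonneg (integral_nonneg_of_ae (one_div_mul_sq_ae_nonneg hm hmw)) hi_pos.le
  · filter_upwards [hφ, hφ_pos] with i hi hi_pos
    rw [← mul_div_assoc]
    exact div_le_div_of_nonneg_right
      (setIntegral_one_div_mul_sq_le hXS hw hm hmw (hi.restrict S)) hi_pos.le

end WeightedEnergy

theorem exists_pos_subset_setOf_lt_dist {α : Type*} [PseudoMetricSpace α] {X : Set α} {z : α}
    (hz : z ∉ closure X) : ∃ r > 0, X ⊆ {y | r < dist y z} := by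
  obtain ⟨ε, hε, hX⟩ : ∃ ε > 0, ∀ y ∈ X, ε ≤ dist z y := by
    simpa only [Metric.mem_closure_iff, not_forall, not_exists, not_and, not_lt, exists_prop]
      using hz
  refine ⟨ε / 2, half_pos hε, fun y hy => ?_⟩
  exact (half_lt_self hε).trans_le ((hX y hy).trans_eq (dist_comm z y))

theorem continuous_eval_euclideanSpace {σ : Type*} (p : MvPolynomial σ ℝ) :
    Continuous fun y : EuclideanSpace ℝ σ => eval y p :=
  p.continuous_eval.comp (PiLp.continuous_ofLp 2 _)

theorem dmcd_off_support_decay_general {α ι : Type*} [PseudoMetricSpace α] [MeasurableSpace α]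
    (ν : Measure α) (X : Set α) (z : α) (hz : z ∉ closure X)
    (f : α → ℝ) (hf : AEMeasurable f (ν.restrict X))
    (m : ℝ) (hm : 0 < m) (hmf : ∀ᵐ y ∂ν.restrict X, m ≤ f y)
    (p : ι → α → ℝ) (hp : ∀ i, AEStronglyMeasurable (p i) (ν.restrict X))
    (φ : ℝ → α → ℝ) (hφ : ∀ ε : ℝ, 0 < ε → MemLp (φ ε) 2 ν)
    (hφ_pos : ∀ ε : ℝ, 0 < ε → 0 < ∫ y, φ ε y ^ 2 ∂ν)
    (hconc : ∀ r : ℝ, 0 < r →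
      Tendsto (fun ε => (∫ y in {y | r < dist y z}, φ ε y ^ 2 ∂ν) / ∫ y, φ ε y ^ 2 ∂ν)
        (nhdsWithin 0 (Set.Ioi 0)) (nhds 0)) :
    (∀ I : Set ι, ∀ ε : ℝ, 0 < ε →
      sSup {t : ℝ | ∃ i ∈ I,
          ∫ y, p i y ^ 2 ∂(ν.restrict X).withDensity (fun y => ENNReal.ofReal (f y)) = 1 ∧
          t = (∫ y in X, φ ε y * p i y ∂ν) ^ 2} ≤
        ∫ y in X, 1 / f y * φ ε y ^ 2 ∂ν ∧
      ∫ y in X, 1 / f y * φ ε y ^ 2 ∂ν ≤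
        1 / m * ∫ y in {y | Metric.infDist z X ≤ dist y z}, φ ε y ^ 2 ∂ν) ∧
    Tendsto (fun ε => (∫ y in X, 1 / f y * φ ε y ^ 2 ∂ν) / ∫ y, φ ε y ^ 2 ∂ν)
      (nhdsWithin 0 (Set.Ioi 0)) (nhds 0) := by
  refine ⟨fun I ε hε => ⟨?_, ?_⟩, ?_⟩
  · refine Real.sSup_le ?_ (integral_nonneg_of_ae (one_div_mul_sq_ae_nonneg hm hmf))
    rintro _ ⟨i, -, hpi, rfl⟩
    exact sq_integral_mul_le_of_integral_sq_withDensity_eq_one hf hm hmf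
      ((hφ ε hε).restrict X) (hp i) hpi
  · have hX : X ⊆ {y | Metric.infDist z X ≤ dist y z} := fun y hy =>
      (Metric.infDist_le_dist_of_mem hy).trans_eq (dist_comm z y)
    exact setIntegral_one_div_mul_sq_le hX hf hm hmf ((hφ ε hε).restrict _)
  · obtain ⟨r, hr, hXr⟩ := exists_pos_subset_setOf_lt_dist hz
    exact tendsto_setIntegral_one_div_mul_sq_div hXr hf hm hmf
      (eventually_nhdsWithin_of_forall hφ) (eventually_nhdsWithin_of_forall hφ_pos) (hconc r hr)

/-- Off-support decay of the density-estimator mollified Christoffel–Darboux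
polynomial: with `μ = f dλ` on the compact set `X`, `f ≥ m > 0`, `z ∉ X`,
`δ = dist(z, X)`, and a family of nonnegative square-integrable mollifiers
`φ_{z,ε}` whose `L²` energy concentrates around `z` as `ε → 0`:
(i) for every degree `d` and every `ε > 0`,
`sup { (∫_X φ_{z,ε} p dλ)² : deg p ≤ d, ‖p‖_{L²(μ)} = 1 }
  ≤ ∫_X (1/f) φ_{z,ε}² dλ ≤ (1/m) ∫_{‖y−z‖ ≥ δ} φ_{z,ε}² dλ`, and
(ii) `∫_X (1/f) φ_{z,ε}² dλ / ∫ φ_{z,ε}² dλ → 0` as `ε → 0⁺`. -/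
theorem dmcd_off_support_decay {n : ℕ}
    (X : Set (EuclideanSpace ℝ (Fin n))) (hXc : IsCompact X)
    (z : EuclideanSpace ℝ (Fin n)) (hz : z ∉ X)
    (δ : ℝ) (hδ : δ = Metric.infDist z X)
    (f : EuclideanSpace ℝ (Fin n) → ℝ) (hfmeas : Measurable f)
    (m : ℝ) (hm : 0 < m) (hfm : ∀ y ∈ X, m ≤ f y)
    (μ : Measure (EuclideanSpace ℝ (Fin n)))
    (hμ : μ = (volume.restrict X).withDensity fun y => ENNReal.ofReal (f y))
    (φ : ℝ → EuclideanSpace ℝ (Fin n) → ℝ)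
    (hφmeas : ∀ ε : ℝ, 0 < ε → Measurable (φ ε))
    (hφnn : ∀ ε : ℝ, 0 < ε → ∀ y, 0 ≤ φ ε y)
    (hφpos : ∀ ε : ℝ, 0 < ε → 0 < ∫ y, (φ ε y) ^ 2)
    (hφint : ∀ ε : ℝ, 0 < ε → Integrable (fun y => (φ ε y) ^ 2) volume)
    (hconc : ∀ δ' : ℝ, 0 < δ' →
      Tendsto (fun ε => (∫ y in {y | δ' < dist y z}, (φ ε y) ^ 2) / ∫ y, (φ ε y) ^ 2)
        (nhdsWithin 0 (Set.Ioi 0)) (nhds 0)) :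
    (∀ d : ℕ, ∀ ε : ℝ, 0 < ε →
      sSup {t : ℝ | ∃ p : MvPolynomial (Fin n) ℝ, p.totalDegree ≤ d ∧
          (∫ y, (eval y p) ^ 2 ∂μ) = 1 ∧
          t = (∫ y in X, φ ε y * eval y p) ^ 2} ≤
        (∫ y in X, (1 / f y) * (φ ε y) ^ 2) ∧
      (∫ y in X, (1 / f y) * (φ ε y) ^ 2) ≤
        (1 / m) * ∫ y in {y | δ ≤ dist y z}, (φ ε y) ^ 2) ∧
    Tendsto (fun ε => (∫ y in X, (1 / f y) * (φ ε y) ^ 2) / ∫ y, (φ ε y) ^ 2)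
      (nhdsWithin 0 (Set.Ioi 0)) (nhds 0) := by
  subst hδ hμ
  have hX : IsClosed X := hXc.isClosed
  have hφ (ε : ℝ) (hε : 0 < ε) : MemLp (φ ε) 2 volume :=
    (memLp_two_iff_integrable_sq (hφmeas ε hε).aestronglyMeasurable).2 (hφint ε hε)
  obtain ⟨hbounds, hlim⟩ := dmcd_off_support_decay_general volume X z (hX.closure_eq.symm ▸ hz)
    f hfmeas.aemeasurable m hm (ae_restrict_of_forall_mem hX.measurableSet hfm)
    (fun (p : MvPolynomial (Fin n) ℝ) y => eval y p)
    (fun p => (continuous_eval_euclideanSpace p).aestronglyMeasurable) φ hφ hφpos hconc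
  exact ⟨fun d => hbounds {p | p.totalDegree ≤ d}, hlim⟩
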